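/- arXiv:2307.01912 — 3 statements merged into one kernel-verified Lean document; each statement's English description precedes it below -/
import Mathlib

section
/- Let n be a natural number and let a, b be natural numbers with a ≥ b. Then the determinant of the n×n rational matrix D_n(a,b) whose (i,j)-entry (for 0 ≤ i, j ≤ n-1) is C(2i+2a, i-j+a-b) − C(2i+2a, i-j+a-b-1) equals ∏_{i=1}^{n} ∏_{j=1}^{a-b} ((a+b+i-j)(a+b+2i+j-2)) / ((a+b+2i-j)(i+j-1)). -/
/-- `C N k` : the binomial coefficient `C(N,k)` for `N : ℕ` and `k : ℤ`,
with the convention that it is `0` when `k < 0` or `k > N`, as a rational. -/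
def C (N : ℕ) (k : ℤ) : ℚ := if 0 ≤ k then (N.choose k.toNat : ℚ) else 0

/-- Base case: the ballot number as a quotient of factorials. -/
theorem ballot_base (M d : ℕ) :
    C (2 * (M + d)) (d : ℤ) - C (2 * (M + d)) ((d : ℤ) - 1) =
    ((2 * (M + d)).factorial : ℚ) * (2 * M + 1) /
      ((d.factorial : ℚ) * ((2 * M + d + 1).factorial : ℚ)) := by
  cases d with
  | zero =>
    have h : ((2 * M).factorial : ℚ) ≠ 0 := by positivity
    simp [C, Nat.factorial_succ]
    field_simp
  | succ e =>
    have e1 : C (2 * (M + (e + 1))) ((e + 1 : ℕ) : ℤ) =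
        ((2 * (M + (e + 1))).factorial : ℚ) /
          (((e + 1).factorial : ℚ) * ((2 * M + e + 1).factorial : ℚ)) := by
      unfold C
      rw [if_pos (by positivity), Int.toNat_natCast, Nat.cast_choose ℚ (by omega),
        show 2 * (M + (e + 1)) - (e + 1) = 2 * M + e + 1 by omega]
    have e2 : C (2 * (M + (e + 1))) (((e + 1 : ℕ) : ℤ) - 1) =
        ((2 * (M + (e + 1))).factorial : ℚ) /
          ((e.factorial : ℚ) * ((2 * M + e + 1 + 1).factorial : ℚ)) := by
      rw [show (((e + 1 : ℕ) : ℤ) - 1) = (e : ℤ) by push_cast; ring]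
      unfold C
      rw [if_pos (by positivity), Int.toNat_natCast, Nat.cast_choose ℚ (by omega),
        show 2 * (M + (e + 1)) - e = 2 * M + e + 1 + 1 by omega]
    rw [e1, e2, show 2 * M + (e + 1) + 1 = 2 * M + e + 1 + 1 by omega,
      Nat.factorial_succ e, Nat.factorial_succ (2 * M + e + 1)]
    have h1 : (e.factorial : ℚ) ≠ 0 := by positivity
    have h2 : ((2 * M + e + 1).factorial : ℚ) ≠ 0 := by positivity
    have h3 : ((e : ℚ) + 1) ≠ 0 := by positivity
    have h4 : (2 * (M : ℚ) + e + 1 + 1) ≠ 0 := by positivity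
    generalize ((2 * (M + (e + 1))).factorial : ℚ) = F
    push_cast
    field_simp
    ring

theorem entry_pos (M d i : ℕ) :
    C (2 * (M + d)) (d : ℤ) - C (2 * (M + d)) ((d : ℤ) - 1) =
    ((2 * (M + d)).factorial : ℚ) * ((2 * M + 1) /
      (((d + i).factorial : ℚ) * ((2 * M + d + i + 1).factorial : ℚ))) *
      ∏ t ∈ Finset.range i, (-((M : ℚ) * (M + 1)) +
        ((M : ℚ) + d + i - t) * ((M : ℚ) + d + i - t + 1)) := by
  induction i with
  | zero => rw [ballot_base]; simp; ring
  | succ i ih =>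
    rw [ih, Finset.prod_range_succ']
    have : ∀ t : ℕ, (-((M : ℚ) * (M + 1)) +
        ((M : ℚ) + d + (i + 1 : ℕ) - (t + 1 : ℕ)) * ((M : ℚ) + d + (i + 1 : ℕ) - (t + 1 : ℕ) + 1))
        = (-((M : ℚ) * (M + 1)) +
        ((M : ℚ) + d + i - t) * ((M : ℚ) + d + i - t + 1)) := by
      intro t; push_cast; ring
    simp only [this]
    rw [show d + (i + 1) = d + i + 1 by omega,
      show 2 * M + d + (i + 1) + 1 = 2 * M + d + i + 1 + 1 by omega,
      Nat.factorial_succ (d + i), Nat.factorial_succ (2 * M + d + i + 1)]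
    have h1 : ((d + i).factorial : ℚ) ≠ 0 := by positivity
    have h2 : ((2 * M + d + i + 1).factorial : ℚ) ≠ 0 := by positivity
    have h3 : ((d : ℚ) + i + 1) ≠ 0 := by positivity
    have h4 : (2 * (M : ℚ) + d + i + 1 + 1) ≠ 0 := by positivity
    generalize ((2 * (M + d)).factorial : ℚ) = F
    generalize ∏ t ∈ Finset.range i, (-((M : ℚ) * (M + 1)) +
        ((M : ℚ) + d + i - t) * ((M : ℚ) + d + i - t + 1)) = P
    push_cast
    field_simp
    ring

theorem entry_eq (N M K i : ℕ) (hK : K = N + i) (hM : M ≤ K) :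
    C (2 * N) ((N : ℤ) - M) - C (2 * N) ((N : ℤ) - M - 1) =
    ((2 * N).factorial : ℚ) * ((2 * M + 1) /
      (((K - M).factorial : ℚ) * ((K + M + 1).factorial : ℚ))) *
      ∏ t ∈ Finset.range i, (-((M : ℚ) * (M + 1)) +
        ((K : ℚ) - t) * ((K : ℚ) - t + 1)) := by
  subst hK
  rcases le_or_gt M N with h | h
  · obtain ⟨d, rfl⟩ := Nat.exists_eq_add_of_le h
    have := entry_pos M d i
    rw [show M + d + i - M = d + i by omega,
      show M + d + i + M + 1 = 2 * M + d + i + 1 by omega]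
    rw [show ((M + d : ℕ) : ℤ) - M = d by push_cast; ring, this]
    push_cast
    rfl
  · have h0 : ∏ t ∈ Finset.range i, (-((M : ℚ) * (M + 1)) +
        (((N + i : ℕ) : ℚ) - t) * (((N + i : ℕ) : ℚ) - t + 1)) = 0 := by
      apply Finset.prod_eq_zero (i := N + i - M)
      · simp; omega
      · rw [Nat.cast_sub hM]; ring
    rw [h0]
    unfold C
    rw [if_neg (by omega), if_neg (by omega)]
    simp

/-- The Vandermonde product. -/
theorem vdm_prod (b n : ℕ) :
    (Matrix.vandermonde (fun j : Fin n =>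
      -((((n - 1 - j : ℕ) + b : ℕ) : ℚ) * ((((n - 1 - j : ℕ) + b : ℕ) : ℚ) + 1)))).det =
    ∏ k ∈ Finset.range n, (k.factorial : ℚ) * ((2 * k + 2 * b).factorial : ℚ) /
      ((k + 2 * b).factorial : ℚ) := by
  induction n with
  | zero => simp
  | succ n ih =>
    rw [Matrix.det_vandermonde] at ih ⊢
    rw [Fin.prod_univ_succ, Finset.prod_range_succ, ← ih, mul_comm]
    congr 1
    · apply Finset.prod_congr rfl
      intro i _
      rw [Fin.prod_Ioi_succ]
      apply Finset.prod_congr rfl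
      intro j _
      have h1 : ∀ j : Fin n, n + 1 - 1 - (j.succ : ℕ) = n - 1 - j := by
        intro j; simp; omega
      simp only [h1]
    · rw [Fin.prod_Ioi_zero]
      have key : ∀ l ≤ n, ∏ k ∈ Finset.range l,
          (((n : ℚ) + b) * (n + b + 1) - ((n : ℚ) - 1 - k + b) * ((n : ℚ) - 1 - k + b + 1)) =
          (l.factorial : ℚ) * ((2 * n + 2 * b).factorial : ℚ) /
            ((2 * n + 2 * b - l).factorial : ℚ) := by
        intro l
        induction l with
        | zero =>
          intro _
          have : ((2 * n + 2 * b).factorial : ℚ) ≠ 0 := by positivity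
          simp; field_simp
        | succ l ihl =>
          intro hl
          rw [Finset.prod_range_succ, ihl (by omega)]
          obtain ⟨e, rfl⟩ := Nat.exists_eq_add_of_le hl
          rw [show 2 * (l + 1 + e) + 2 * b - l = (l + 2 * e + 2 * b + 1) + 1 by omega,
            show 2 * (l + 1 + e) + 2 * b - (l + 1) = (l + 2 * e + 2 * b) + 1 by omega,
            Nat.factorial_succ (l + 2 * e + 2 * b + 1), Nat.factorial_succ l]
          have h2 : ((l + 2 * e + 2 * b + 1).factorial : ℚ) ≠ 0 := by positivity
          have h4 : ((l : ℚ) + 2 * e + 2 * b + 1 + 1) ≠ 0 := by positivity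
          generalize ((2 * (l + 1 + e) + 2 * b).factorial : ℚ) = F
          push_cast
          field_simp
          ring
      have := key n le_rfl
      rw [show 2 * n + 2 * b - n = n + 2 * b by omega] at this
      rw [← this, ← Fin.prod_univ_eq_prod_range (fun k : ℕ =>
          (((n : ℚ) + b) * (n + b + 1) - ((n : ℚ) - 1 - k + b) * ((n : ℚ) - 1 - k + b + 1)))]
      apply Finset.prod_congr rfl
      intro j _
      have hj := j.2
      obtain ⟨e, he⟩ := Nat.exists_eq_add_of_lt hj
      have h1 : n + 1 - 1 - (j.succ : ℕ) = e := by simp; omega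
      have h0 : n + 1 - 1 - ((0 : Fin (n + 1)) : ℕ) = n := by simp
      rw [h1, h0]
      have : (n : ℚ) = j + e + 1 := by exact_mod_cast he
      rw [this]
      push_cast
      rw [this]
      ring

theorem det_poly (b n : ℕ) (c : ℕ → ℚ) :
    (Matrix.of fun i j : Fin n => ∏ t ∈ Finset.range (n - 1 - i),
      (-((((j : ℕ) + b : ℕ) : ℚ) * ((((j : ℕ) + b : ℕ) : ℚ) + 1)) + c t)).det =
    ∏ k ∈ Finset.range n, (k.factorial : ℚ) * ((2 * k + 2 * b).factorial : ℚ) /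
      ((k + 2 * b).factorial : ℚ) := by
  rw [← vdm_prod, Matrix.det_eval_matrixOfPolynomials_eq_det_vandermonde _
    (fun i : Fin n => ∏ t ∈ Finset.range i, (Polynomial.X + Polynomial.C (c t)))]
  · rw [← Matrix.det_transpose, ← Matrix.det_submatrix_equiv_self (Fin.revPerm)]
    congr 1
    ext i j
    have h : ∀ i : Fin n, n - (↑i + 1) = n - 1 - (i : ℕ) := by intro i; omega
    have h' : n - 1 - (n - 1 - (j : ℕ)) = j := by omega
    simp [Polynomial.eval_prod, Fin.val_rev, h, h']
  · intro i
    rw [Polynomial.natDegree_prod_of_monic _ _ (fun t _ => Polynomial.monic_X_add_C _)]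
    simp
  · intro i
    exact Polynomial.monic_prod_of_monic _ _ (fun t _ => Polynomial.monic_X_add_C _)

/-- The inner product as a quotient of factorials. -/
theorem inner_prod (b m n : ℕ) :
    ∏ j ∈ Finset.Icc 1 m,
      ((((b + m : ℕ) : ℚ) + b + (n + 1 : ℕ) - j) * (((b + m : ℕ) : ℚ) + b + 2 * (n + 1 : ℕ) + j - 2)) /
      (((((b + m : ℕ) : ℚ) + b + 2 * (n + 1 : ℕ) - j)) * (((n + 1 : ℕ) : ℚ) + j - 1)) =
    ((2 * n + 2 * (b + m)).factorial : ℚ) * (2 * n + 2 * b + 1) * n.factorial *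
      (2 * n + 2 * b).factorial * (n + 2 * b + m).factorial /
    ((n + 2 * b).factorial * (m + n).factorial * (2 * n + 2 * b + m).factorial *
      (2 * n + 2 * b + m + 1).factorial) := by
  have key : ∀ l ≤ m, ∏ j ∈ Finset.Icc 1 l,
      ((((b + m : ℕ) : ℚ) + b + (n + 1 : ℕ) - j) * (((b + m : ℕ) : ℚ) + b + 2 * (n + 1 : ℕ) + j - 2)) /
      (((((b + m : ℕ) : ℚ) + b + 2 * (n + 1 : ℕ) - j)) * (((n + 1 : ℕ) : ℚ) + j - 1)) =
      ((n + 2 * b + m).factorial : ℚ) * (2 * n + 2 * b + m + l).factorial *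
        (2 * n + 2 * b + m + 1 - l).factorial * n.factorial /
      ((n + 2 * b + m - l).factorial * (2 * n + 2 * b + m).factorial *
        (2 * n + 2 * b + m + 1).factorial * (n + l).factorial) := by
    intro l
    induction l with
    | zero =>
      intro _
      simp
      field_simp
    | succ l ih =>
      intro hl
      rw [Finset.prod_Icc_succ_top (by omega), ih (by omega)]
      obtain ⟨e, rfl⟩ := Nat.exists_eq_add_of_le hl
      rw [show n + 2 * b + (l + 1 + e) - l = n + 2 * b + e + 1 by omega,
        show n + 2 * b + (l + 1 + e) - (l + 1) = n + 2 * b + e by omega,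
        show 2 * n + 2 * b + (l + 1 + e) + 1 - l = (2 * n + 2 * b + e + 1) + 1 by omega,
        show 2 * n + 2 * b + (l + 1 + e) + 1 - (l + 1) = (2 * n + 2 * b + e + 1) by omega,
        ← add_assoc n l 1, ← add_assoc (2 * n + 2 * b + (l + 1 + e)) l 1,
        Nat.factorial_succ (n + 2 * b + e), Nat.factorial_succ (2 * n + 2 * b + e + 1),
        Nat.factorial_succ (n + l), Nat.factorial_succ (2 * n + 2 * b + (l + 1 + e) + l)]
      have h1 : ((n + 2 * b + e).factorial : ℚ) ≠ 0 := by positivity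
      have h2 : ((2 * n + 2 * b + (l + 1 + e)).factorial : ℚ) ≠ 0 := by positivity
      have h3 : ((2 * n + 2 * b + (l + 1 + e) + 1).factorial : ℚ) ≠ 0 := by positivity
      have h4 : ((n + l).factorial : ℚ) ≠ 0 := by positivity
      push_cast
      rw [show (b : ℚ) + (l + 1 + e) + b + (n + 1) - (l + 1) = n + 2 * b + e + 1 by ring,
        show (b : ℚ) + (l + 1 + e) + b + 2 * (n + 1) + (l + 1) - 2
          = 2 * n + 2 * b + (l + 1 + e) + l + 1 by ring,
        show (b : ℚ) + (l + 1 + e) + b + 2 * (n + 1) - (l + 1) = 2 * n + 2 * b + e + 1 + 1 by ring,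
        show (n : ℚ) + 1 + (l + 1) - 1 = n + l + 1 by ring]
      field_simp
  rw [key m le_rfl, show n + 2 * b + m - m = n + 2 * b by omega,
    show 2 * n + 2 * b + m + 1 - m = 2 * n + 2 * b + 1 by omega,
    Nat.factorial_succ (2 * n + 2 * b), show 2 * n + 2 * b + m + m = 2 * n + 2 * (b + m) by ring,
    add_comm m n]
  push_cast
  field_simp

theorem fact_prod1 (m n : ℕ) :
    ∏ j ∈ Finset.range n, ((m + n - 1 - j).factorial : ℚ) =
      ∏ j ∈ Finset.range n, ((m + j).factorial : ℚ) := by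
  rw [← Finset.prod_range_reflect]
  apply Finset.prod_congr rfl
  intro j hj
  rw [Finset.mem_range] at hj
  rw [show m + n - 1 - (n - 1 - j) = m + j by omega]

theorem fact_prod2 (s n : ℕ) :
    ∏ j ∈ Finset.range n, ((s + n + j).factorial : ℚ) =
      ∏ j ∈ Finset.range n, ((s + 2 * j).factorial : ℚ) * ((s + 2 * j + 1).factorial : ℚ) /
        ((s + j).factorial : ℚ) := by
  induction n with
  | zero => simp
  | succ n ih =>
    rw [Finset.prod_range_succ (n := n) (f := fun j => ((s + 2 * j).factorial : ℚ) *
      ((s + 2 * j + 1).factorial : ℚ) / ((s + j).factorial : ℚ)), ← ih]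
    have h := Finset.prod_range_succ (fun j => ((s + n + j).factorial : ℚ)) n
    rw [Finset.prod_range_succ'] at h
    rw [Finset.prod_range_succ]
    have h1 : ∀ j, s + (n + 1) + j = s + n + (j + 1) := by intro j; ring
    simp only [h1]
    rw [show s + n + (n + 1) = s + 2 * n + 1 by ring]
    rw [show s + n + n = s + 2 * n by ring, add_zero] at h
    have h2 : ((s + n).factorial : ℚ) ≠ 0 := by positivity
    rw [eq_div_of_mul_eq h2 h]
    field_simp

theorem det_D_eq (n a b : ℕ) (hab : b ≤ a) :
    Matrix.det (Matrix.of fun i j : Fin n =>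
      C (2 * (i : ℕ) + 2 * a) ((i : ℤ) - (j : ℤ) + a - b) -
      C (2 * (i : ℕ) + 2 * a) ((i : ℤ) - (j : ℤ) + a - b - 1)) =
    ∏ i ∈ Finset.Icc 1 n, ∏ j ∈ Finset.Icc 1 (a - b),
      (((a : ℚ) + b + i - j) * ((a : ℚ) + b + 2 * i + j - 2)) /
      ((((a : ℚ) + b + 2 * i - j)) * ((i : ℚ) + j - 1)) := by
  obtain ⟨m, rfl⟩ := Nat.exists_eq_add_of_le hab
  have hm : b + m - b = m := by omega
  rw [hm, ← Finset.Ico_add_one_right_eq_Icc, Finset.prod_Ico_eq_prod_range]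
  simp only [add_comm 1, Nat.add_sub_cancel]
  simp only [inner_prod]
  have hmat : (Matrix.of fun i j : Fin n =>
      C (2 * (i : ℕ) + 2 * (b + m)) ((i : ℤ) - (j : ℤ) + (b + m : ℕ) - b) -
      C (2 * (i : ℕ) + 2 * (b + m)) ((i : ℤ) - (j : ℤ) + (b + m : ℕ) - b - 1)) =
      Matrix.of fun i j : Fin n => ((2 * (i : ℕ) + 2 * (b + m)).factorial : ℚ) *
        (Matrix.of fun i j : Fin n => ((2 * (j : ℚ) + 2 * b + 1) /
          (((m + n - 1 - j).factorial : ℚ) * ((2 * b + m + n + j).factorial : ℚ))) *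
          (Matrix.of fun i j : Fin n => ∏ t ∈ Finset.range (n - 1 - i),
      (-((((j : ℕ) + b : ℕ) : ℚ) * ((((j : ℕ) + b : ℕ) : ℚ) + 1)) +
        (fun t : ℕ => (((b + m + n - 1 : ℕ) : ℚ) - t) * (((b + m + n - 1 : ℕ) : ℚ) - t + 1)) t)) i j) i j := by
    ext i j
    have hi := i.2
    have hj := j.2
    have := entry_eq (i + (b + m)) (j + b) (b + m + n - 1) (n - 1 - i) (by omega) (by omega)
    simp only [Matrix.of_apply]
    rw [show b + m + n - 1 - (j + b) = m + n - 1 - j by omega,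
      show b + m + n - 1 + (j + b) + 1 = 2 * b + m + n + j by omega,
      show 2 * ((i : ℕ) + (b + m)) = 2 * i + 2 * (b + m) by ring,
      show (((i : ℕ) + (b + m) : ℕ) : ℤ) - ((j + b : ℕ) : ℤ) =
        (i : ℤ) - (j : ℤ) + (b + m : ℕ) - b by push_cast; ring] at this
    rw [this]
    push_cast
    ring
  rw [hmat, Matrix.det_mul_column, Matrix.det_mul_row, det_poly]
  rw [Fin.prod_univ_eq_prod_range (fun i : ℕ => ((2 * i + 2 * (b + m)).factorial : ℚ)),
    Fin.prod_univ_eq_prod_range (fun j : ℕ => ((2 * (j : ℚ) + 2 * b + 1) /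
          (((m + n - 1 - j).factorial : ℚ) * ((2 * b + m + n + j).factorial : ℚ))))]
  rw [Finset.prod_div_distrib, Finset.prod_mul_distrib (s := Finset.range n)
    (f := fun j => ((m + n - 1 - j).factorial : ℚ)), fact_prod1, fact_prod2,
    ← Finset.prod_mul_distrib, ← Finset.prod_div_distrib, ← Finset.prod_mul_distrib,
    ← Finset.prod_mul_distrib]
  apply Finset.prod_congr rfl
  intro k _
  rw [show 2 * b + m + 2 * k = 2 * k + 2 * b + m by ring,
    show 2 * b + m + k = k + 2 * b + m by ring]
  field_simp
end

section
/- Let n, m be natural numbers and let x be an integer with x + m ≥ 0. Then the determinant of the n×n rational matrix T_{n,m}(x) whose (i,j)-entry (for 0 ≤ i, j ≤ n-1) is C(x+m, j-i+m) − C(x+m, m-i-j-1) equals the determinant of the n×n rational matrix B_{n,m}(x) whose (i,j)-entry (for 0 ≤ i, j ≤ n-1) is C(x+m+2i, i-j+m) − C(x+m+2i, i-j+m-1). -/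
/-- The ballot numbers, by their recursion. -/
def ballotU : ℕ → ℕ → ℚ
  | 0, 0 => 1
  | 0, _ + 1 => 0
  | j + 1, 0 => ballotU j 0 + ballotU j 1
  | j + 1, k + 1 => ballotU j k + 2 * ballotU j (k + 1) + ballotU j (k + 2)

theorem ballotU_zero (j k : ℕ) (h : j < k) : ballotU j k = 0 := by
  induction j generalizing k with
  | zero =>
    obtain ⟨k, rfl⟩ : ∃ l, k = l + 1 := ⟨k - 1, by omega⟩
    rfl
  | succ j ih =>
    obtain ⟨k, rfl⟩ : ∃ l, k = l + 1 := ⟨k - 1, by omega⟩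
    rw [ballotU, ih _ (by omega), ih _ (by omega), ih _ (by omega)]
    norm_num

theorem ballotU_diag (j : ℕ) : ballotU j j = 1 := by
  induction j with
  | zero => rfl
  | succ j ih =>
    rw [ballotU, ih, ballotU_zero _ _ (by omega), ballotU_zero _ _ (by omega)]
    norm_num

theorem ballotU_sum_aux (f : ℤ → ℚ) (hf : f (-1) = - f 0) (j n : ℕ) :
    ∑ k ∈ Finset.range (n + 1), ballotU (j + 1) k * f k =
      ∑ k ∈ Finset.range (n + 1), ballotU j k * (f (k + 1) + 2 * f k + f (k - 1))
        - ballotU j n * f (n + 1) + ballotU j (n + 1) * f n := by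
  induction n with
  | zero =>
    simp [ballotU, hf]
    ring
  | succ n ih =>
    rw [Finset.sum_range_succ, ih, Finset.sum_range_succ _ (n + 1), ballotU]
    push_cast
    rw [show (n : ℤ) + 1 - 1 = n by ring]
    ring

theorem ballotU_sum (f : ℤ → ℚ) (hf : f (-1) = - f 0) (j n : ℕ) (h : j + 1 < n) :
    ∑ k ∈ Finset.range n, ballotU (j + 1) k * f k =
      ∑ k ∈ Finset.range n, ballotU j k * (f (k + 1) + 2 * f k + f (k - 1)) := by
  obtain ⟨n, rfl⟩ : ∃ l, n = l + 1 := ⟨n - 1, by omega⟩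
  rw [ballotU_sum_aux f hf, ballotU_zero j n (by omega), ballotU_zero j (n + 1) (by omega)]
  ring

theorem C_succ (N : ℕ) (p : ℤ) : C (N + 1) p = C N p + C N (p - 1) := by
  rcases lt_trichotomy p 0 with h | h | h
  · simp [C, show ¬ (0 ≤ p) by omega, show ¬ (1 ≤ p) by omega]
  · subst h
    simp [C]
  · obtain ⟨k, rfl⟩ : ∃ k : ℕ, p = k + 1 := ⟨(p - 1).toNat, by omega⟩
    have e : ((k : ℤ) + 1).toNat = k + 1 := by omega
    simp only [C, show (0 : ℤ) ≤ k + 1 by omega, show (0 : ℤ) ≤ k + 1 - 1 by omega, if_true, e,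
      show ((k : ℤ) + 1 - 1).toNat = k by omega, Nat.choose_succ_succ]
    push_cast
    ring

theorem C_succ_two (N : ℕ) (p : ℤ) : C (N + 2) p = C N p + 2 * C N (p - 1) + C N (p - 2) := by
  rw [C_succ, C_succ, C_succ, show p - 1 - 1 = p - 2 by ring]
  ring

theorem key (N j n : ℕ) (h : j < n) (q : ℤ) :
    C (N + 2 * j) (q + j) - C (N + 2 * j) (q + j - 1) =
      ∑ k ∈ Finset.range n, ballotU j k * (C N (q + k) - C N (q - k - 1)) := by
  induction j generalizing q with
  | zero =>
    rw [Finset.sum_eq_single_of_mem 0 (by simpa using h)]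
    · simp [ballotU]
    · intro b _ hb
      rw [ballotU_zero 0 b (by omega), zero_mul]
  | succ j ih =>
    have h1 := ballotU_sum (fun k => C N (q + k) - C N (q - k - 1)) (by
      rw [show q - -1 - 1 = q + 0 by ring, show q + -1 = q - 0 - 1 by ring]
      ring) j n h
    rw [h1]
    have a := ih (by omega) (q + 1)
    have b := ih (by omega) q
    have c := ih (by omega) (q - 1)
    have e : C (N + 2 * (j + 1)) (q + (j + 1 : ℕ)) - C (N + 2 * (j + 1)) (q + (j + 1 : ℕ) - 1)
        = (C (N + 2 * j) (q + 1 + j) - C (N + 2 * j) (q + 1 + j - 1))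
        + 2 * (C (N + 2 * j) (q + j) - C (N + 2 * j) (q + j - 1))
        + (C (N + 2 * j) (q - 1 + j) - C (N + 2 * j) (q - 1 + j - 1)) := by
      rw [show N + 2 * (j + 1) = N + 2 * j + 2 by ring, C_succ_two, C_succ_two]
      push_cast
      ring_nf
    rw [e, a, b, c, Finset.mul_sum, ← Finset.sum_add_distrib, ← Finset.sum_add_distrib]
    refine Finset.sum_congr rfl fun k _ => ?_
    rw [show q + 1 + (k : ℤ) = q + (k + 1) by ring, show q + 1 - (k : ℤ) - 1 = q - (k - 1) - 1 by ring,
      show q - 1 + (k : ℤ) = q + (k - 1) by ring, show q - 1 - (k : ℤ) - 1 = q - (k + 1) - 1 by ring]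
    ring

theorem det_T_eq_det_B (n m : ℕ) (x : ℤ) (hx : 0 ≤ x + m) :
    Matrix.det (Matrix.of fun i j : Fin n =>
      C (x + m).toNat ((j : ℤ) - (i : ℤ) + m) -
      C (x + m).toNat ((m : ℤ) - (i : ℤ) - (j : ℤ) - 1)) =
    Matrix.det (Matrix.of fun i j : Fin n =>
      C (x + m + 2 * (i : ℕ)).toNat ((i : ℤ) - (j : ℤ) + m) -
      C (x + m + 2 * (i : ℕ)).toNat ((i : ℤ) - (j : ℤ) + m - 1)) := by
  obtain ⟨N, hN⟩ : ∃ N : ℕ, x + m = N := ⟨(x + m).toNat, by omega⟩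
  rw [hN]
  set T : Matrix (Fin n) (Fin n) ℚ := Matrix.of fun i j : Fin n =>
      C (N : ℤ).toNat ((j : ℤ) - (i : ℤ) + m) -
      C (N : ℤ).toNat ((m : ℤ) - (i : ℤ) - (j : ℤ) - 1) with hT
  set L : Matrix (Fin n) (Fin n) ℚ := Matrix.of fun j k : Fin n => ballotU j k with hL
  have hdet : L.det = 1 := by
    rw [Matrix.det_of_lowerTriangular L (fun i j hij => ballotU_zero _ _ (by simpa using hij))]
    exact Finset.prod_eq_one fun i _ => ballotU_diag _
  rw [← Matrix.det_transpose T, ← one_mul (Matrix.det T.transpose), ← hdet, ← Matrix.det_mul]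
  congr 1
  ext i j
  have hk := key N i n i.2 ((m : ℤ) - j)
  rw [← Fin.sum_univ_eq_sum_range
    (fun k => ballotU i k * (C N ((m : ℤ) - j + k) - C N ((m : ℤ) - j - k - 1)))] at hk
  simp only [Matrix.mul_apply, Matrix.transpose_apply, hT, hL, Matrix.of_apply, Int.toNat_natCast]
  rw [show ((N : ℤ) + 2 * (i : ℕ)).toNat = N + 2 * i by omega,
    show (i : ℤ) - (j : ℤ) + m = (m : ℤ) - j + (i : ℕ) by ring, hk]
  refine Finset.sum_congr rfl fun k _ => ?_
  rw [show (k : ℤ) - (j : ℤ) + m = (m : ℤ) - j + (k : ℕ) by ring]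
end

section
/- Let a, b, c be natural numbers. Then the determinant of the c×c rational matrix whose (i,j)-entry (for 0 ≤ i, j ≤ c-1) is C(a+b, a−i+j) equals ∏_{i=0}^{a-1} ∏_{j=0}^{b-1} ∏_{k=0}^{c-1} (i+j+k+2) / (i+j+k+1). -/
theorem C_pascal (N : ℕ) (z : ℤ) : C (N+1) (z+1) = C N z + C N (z+1) := by
  unfold C
  rcases lt_trichotomy z (-1) with h | h | h
  · rw [if_neg (by omega), if_neg (by omega), if_neg (by omega)]; simp
  · subst h; simp
  · obtain ⟨n, rfl⟩ := Int.eq_ofNat_of_zero_le (show 0 ≤ z by omega)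
    rw [if_pos (by omega), if_pos (by omega), if_pos (by omega)]
    have h1 : ((n:ℤ)+1).toNat = n+1 := by omega
    rw [h1, Int.toNat_natCast, Nat.choose_succ_succ]
    push_cast; ring

theorem C_vand (N : ℕ) (j : ℕ) : ∀ (z : ℤ) (c : ℕ), j < c →
    ∑ k ∈ Finset.range c, C N (z + k) * (j.choose k : ℚ) = C (N + j) (z + j) := by
  induction j with
  | zero =>
    intro z c hc
    obtain ⟨c, rfl⟩ : ∃ d, c = d + 1 := ⟨c - 1, by omega⟩
    rw [Finset.sum_range_succ']
    simp
  | succ j ih =>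
    intro z c hc
    obtain ⟨c, rfl⟩ : ∃ d, c = d + 1 := ⟨c - 1, by omega⟩
    have h1 := ih (z+1) c (by omega)
    have h2 := ih z (c+1) (by omega)
    rw [Finset.sum_range_succ'] at h2 ⊢
    have h3 := C_pascal (N + j) (z + j)
    have e : z + ((j + 1 : ℕ) : ℤ) = z + j + 1 := by push_cast; ring
    have e2 : z + 1 + (j:ℤ) = z + j + 1 := by ring
    rw [e, ← add_assoc N j 1, h3, ← h2, ← e2, ← h1]
    simp only [Nat.choose_succ_succ, Nat.choose_zero_right]
    push_cast
    simp only [mul_add, Finset.sum_add_distrib]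
    have e3 : ∀ k : ℕ, z + 1 + (k:ℤ) = z + (k + 1) := fun k => by ring
    simp only [e3]
    ring

theorem C_fact (a b i j : ℕ) : C (a + b + j) ((a:ℤ) - i + j) =
    (((a+b+j).factorial : ℚ) / (a+j).factorial) *
      ((1 / ((b+i).factorial : ℚ)) * ((a+j).descFactorial i : ℚ)) := by
  unfold C
  by_cases h : i ≤ a + j
  · obtain ⟨m, hm⟩ : ∃ m, a + j = m + i := ⟨a + j - i, by omega⟩
    rw [if_pos (by omega)]
    have e : ((a:ℤ) - i + j).toNat = m := by omega
    have e1 : a + b + j = m + (b + i) := by omega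
    rw [e, e1, hm, Nat.cast_add_choose]
    have h4 := Nat.factorial_mul_descFactorial (show i ≤ m + i by omega)
    rw [Nat.add_sub_cancel] at h4
    have h5 : ((m.factorial : ℚ)) * ((m+i).descFactorial i : ℚ) = ((m+i).factorial : ℚ) := by
      exact_mod_cast h4
    have h6 : (m.factorial : ℚ) ≠ 0 := by exact_mod_cast m.factorial_ne_zero
    have h7 : ((m+i).factorial : ℚ) ≠ 0 := by exact_mod_cast (m+i).factorial_ne_zero
    have h8 : ((b+i).factorial : ℚ) ≠ 0 := by exact_mod_cast (b+i).factorial_ne_zero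
    field_simp
    linear_combination (-1 : ℚ) * h5
  · rw [if_neg (by omega), Nat.descFactorial_of_lt (by omega)]; simp

theorem det_desc (a c : ℕ) :
    Matrix.det (Matrix.of fun i j : Fin c => ((a+(j:ℕ)).descFactorial i : ℚ)) =
      ∏ k ∈ Finset.range c, (k.factorial : ℚ) := by
  have h := Matrix.det_eval_matrixOfPolynomials_eq_det_vandermonde
    (fun i : Fin c => ((i:ℕ):ℚ) + (a:ℚ)) (fun i : Fin c => descPochhammer ℚ i)
    (fun i => descPochhammer_natDegree ℚ i) (fun i => monic_descPochhammer ℚ i)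
  rw [← Matrix.det_transpose]
  have e : (Matrix.of fun i j : Fin c => ((a+(j:ℕ)).descFactorial i : ℚ)).transpose =
      Matrix.of fun i j : Fin c => (descPochhammer ℚ j).eval (((i:ℕ):ℚ) + (a:ℚ)) := by
    ext i j
    simp only [Matrix.transpose_apply, Matrix.of_apply]
    rw [← descPochhammer_eval_eq_descFactorial]
    push_cast
    rw [add_comm]
  rw [e, ← h, Matrix.det_vandermonde_add]
  cases c with
  | zero => simp
  | succ n =>
    rw [Matrix.det_vandermonde_id_eq_superFactorial]
    rw [← Nat.prod_range_succ_factorial]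
    push_cast
    rfl

theorem prod_tel (b : ℕ) (x : ℚ) (hx : 0 ≤ x) :
    ∏ j ∈ Finset.range b, (x + j + 2) / (x + j + 1) = (x + b + 1) / (x + 1) := by
  induction b with
  | zero => have : x + 1 ≠ 0 := by positivity
            simp [this]
  | succ b ih =>
    rw [Finset.prod_range_succ, ih]
    have : x + 1 ≠ 0 := by positivity
    have : x + b + 1 ≠ 0 := by positivity
    push_cast
    field_simp
    ring

theorem prod_tel2 (a b k : ℕ) :
    ∏ i ∈ Finset.range a, ∏ j ∈ Finset.range b, ((i : ℚ) + j + k + 2) / ((i : ℚ) + j + k + 1) =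
    ((a+b+k).factorial : ℚ) / (a+k).factorial * (1 / ((b+k).factorial : ℚ)) * k.factorial := by
  have hf : ∀ n : ℕ, (n.factorial : ℚ) ≠ 0 := fun n => by exact_mod_cast n.factorial_ne_zero
  induction a with
  | zero =>
    have := hf k
    have := hf (b+k)
    simp only [Finset.range_zero, Finset.prod_empty, Nat.zero_add]
    field_simp
  | succ a ih =>
    rw [Finset.prod_range_succ, ih]
    have h := prod_tel b ((a:ℚ) + k) (by positivity)
    have e : ∏ j ∈ Finset.range b, ((a : ℚ) + j + k + 2) / ((a : ℚ) + j + k + 1) =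
        ((a:ℚ) + k + b + 1) / (a + k + 1) := by
      rw [← h]
      refine Finset.prod_congr rfl fun j _ => ?_
      congr 1 <;> ring
    rw [e, show a + 1 + b + k = (a + b + k) + 1 by ring, show a + 1 + k = (a + k) + 1 by ring,
      Nat.factorial_succ, Nat.factorial_succ]
    have := hf (a+k)
    have := hf (b+k)
    have : (a:ℚ) + k + 1 ≠ 0 := by positivity
    push_cast
    field_simp
    ring

theorem det_macmahon (a b c : ℕ) :
    Matrix.det (Matrix.of fun i j : Fin c =>
      C (a + b) ((a : ℤ) - (i : ℤ) + (j : ℤ))) =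
    ∏ i ∈ Finset.range a, ∏ j ∈ Finset.range b, ∏ k ∈ Finset.range c,
      ((i : ℚ) + j + k + 2) / ((i : ℚ) + j + k + 1) := by
  have hU : Matrix.det (Matrix.of fun k j : Fin c => ((j:ℕ).choose k : ℚ)) = 1 := by
    rw [Matrix.det_of_isUpperTriangular]
    · simp
    · intro i j hij
      simp only [Matrix.of_apply]
      exact_mod_cast Nat.choose_eq_zero_of_lt hij
  have hR : ∏ i ∈ Finset.range a, ∏ j ∈ Finset.range b, ∏ k ∈ Finset.range c,
      ((i : ℚ) + j + k + 2) / ((i : ℚ) + j + k + 1) =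
      ∏ k ∈ Finset.range c, (((a+b+k).factorial : ℚ) / (a+k).factorial *
        (1 / ((b+k).factorial : ℚ)) * k.factorial) := by
    simp_rw [← prod_tel2]
    rw [Finset.prod_comm]
    rw [Finset.prod_congr rfl fun j _ => Finset.prod_comm]
    rw [Finset.prod_comm]
    refine Finset.prod_congr rfl fun k _ => ?_
    rw [Finset.prod_comm]
  have hM : (Matrix.of fun i j : Fin c => C (a + b) ((a : ℤ) - (i : ℤ) + (j : ℤ))) *
      (Matrix.of fun k j : Fin c => ((j:ℕ).choose k : ℚ)) =
      Matrix.of fun i j : Fin c => (((a+b+(j:ℕ)).factorial : ℚ) / (a+(j:ℕ)).factorial) *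
        (Matrix.of fun i j : Fin c => (1 / ((b+(i:ℕ)).factorial : ℚ)) *
        (Matrix.of fun i j : Fin c => ((a+(j:ℕ)).descFactorial i : ℚ)) i j) i j := by
    ext i j
    simp only [Matrix.mul_apply, Matrix.of_apply]
    rw [← C_fact, ← C_vand (a+b) j _ c j.2, Finset.sum_range]
  have hD := Matrix.det_mul
    (Matrix.of fun i j : Fin c => C (a + b) ((a : ℤ) - (i : ℤ) + (j : ℤ)))
    (Matrix.of fun k j : Fin c => ((j:ℕ).choose k : ℚ))
  rw [hU, mul_one] at hD
  rw [hR, ← hD, hM, Matrix.det_mul_row,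
    Matrix.det_mul_column, det_desc, Finset.prod_mul_distrib, Finset.prod_mul_distrib,
    Finset.prod_range (n := c) (fun k => ((a+b+k).factorial : ℚ) / (a+k).factorial),
    Finset.prod_range (n := c) (fun k => 1 / ((b+k).factorial : ℚ)), mul_assoc]
end
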